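/- Let σ : Δ_d → ℝ^N be continuous on Δ_d and differentiable at every interior point of Δ_d. Suppose that for every strictly increasing map I : {1,…,d} → {1,…,N}, the pullback density of the constant standard d-form dx_I along σ is Lebesgue-integrable on the interior of Δ_d. Then σ has finite volume, i.e., for every map ω from σ(Δ_d) to alternating d-linear forms on ℝ^N that is continuous on σ(Δ_d), the pullback density of ω along σ is Lebesgue-integrable on the interior of Δ_d. -/

import Mathlib

open MeasureTheory Set

noncomputable section

/-- The standard `d`-simplex `Δ_d ⊆ ℝ^d`. -/
def simplexSet (d : ℕ) : Set (Fin d → ℝ) :=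
  {b | (∀ i, 0 ≤ b i) ∧ ∑ i, b i ≤ 1}

/-- The `i`-th face map `δ_i : Δ_d → Δ_{d+1}` (as a map of ambient spaces):
`δ_0 b = (1 - ∑ b, b)` and, for `i ≥ 1`, `δ_i` inserts a `0` at position `i - 1`. -/
def faceMap (d : ℕ) (i : Fin (d + 2)) (b : Fin d → ℝ) : Fin (d + 1) → ℝ :=
  if h : i = 0 then Fin.cons (1 - ∑ j, b j) b
  else Fin.insertNth (i.pred h) 0 b

/-- Continuous `d`-multilinear forms on `ℝ^N` (on finite-dimensional spaces every
multilinear form is automatically continuous). -/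
abbrev Form (N d : ℕ) : Type :=
  ContinuousMultilinearMap ℝ (fun _ : Fin d => (Fin N → ℝ)) ℝ

/-- A multilinear form is alternating if it vanishes whenever two arguments agree. -/
def IsAlternatingForm {N d : ℕ} (A : Form N d) : Prop :=
  ∀ v : Fin d → (Fin N → ℝ), ∀ i j, v i = v j → i ≠ j → A v = 0

/-- The pullback density `ω(σ(x))(Dσ(x)e_1, …, Dσ(x)e_d)` of a `d`-form `ω` along `σ`
at `x`, where `e_1, …, e_d` is the standard basis of `ℝ^d`. -/
def pullbackDensity {d N : ℕ} (σ : (Fin d → ℝ) → (Fin N → ℝ))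
    (ω : (Fin N → ℝ) → Form N d) (x : Fin d → ℝ) : ℝ :=
  ω (σ x) fun j => fderiv ℝ σ x (Pi.single j 1)

/-- A simplex `σ : Δ_d → ℝ^N` has finite volume if for every family of alternating
`d`-forms, continuous on `σ(Δ_d)`, the pullback density along `σ` is Lebesgue
integrable on the interior of `Δ_d`. -/
def FiniteVolume {d N : ℕ} (σ : (Fin d → ℝ) → (Fin N → ℝ)) : Prop :=
  ∀ ω : (Fin N → ℝ) → Form N d,
    (∀ y ∈ σ '' simplexSet d, IsAlternatingForm (ω y)) →
    ContinuousOn ω (σ '' simplexSet d) →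
    IntegrableOn (pullbackDensity σ ω) (interior (simplexSet d))

/-- The pullback density of the exterior derivative `dω` of a `d`-form `ω` along a
`(d+1)`-simplex `σ` at `x`:
`dω(y)(v_0, …, v_d) = ∑ i, (-1)^i (Dω(y)v_i)(v_0, …, v̂_i, …, v_d)` with `v_i = Dσ(x)e_i`. -/
def pullbackDensityD {d N : ℕ} (σ : (Fin (d + 1) → ℝ) → (Fin N → ℝ))
    (ω : (Fin N → ℝ) → Form N d) (x : Fin (d + 1) → ℝ) : ℝ :=
  ∑ i : Fin (d + 1), (-1 : ℝ) ^ (i : ℕ) *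
    fderiv ℝ ω (σ x) (fderiv ℝ σ x (Pi.single i 1))
      (fun j => fderiv ℝ σ x (Pi.single (i.succAbove j) 1))

/-- A `(d+1)`-simplex `σ` (C¹ on all open faces) satisfies Stokes if it and all of its
faces have finite volume, and Stokes' formula
`∫_{Δ_{d+1}} σ^*(dω) = ∑ i (-1)^i ∫_{Δ_d} (σ ∘ δ_i)^*(ω)` holds for every C¹ family of
alternating `d`-forms `ω` on an open neighbourhood of `σ(Δ_{d+1})`. -/
def SatisfiesStokes {d N : ℕ} (σ : (Fin (d + 1) → ℝ) → (Fin N → ℝ)) : Prop :=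
  FiniteVolume σ ∧ (∀ i : Fin (d + 2), FiniteVolume (σ ∘ faceMap d i)) ∧
  ∀ (V : Set (Fin N → ℝ)) (ω : (Fin N → ℝ) → Form N d),
    IsOpen V → σ '' simplexSet (d + 1) ⊆ V →
    (∀ y ∈ V, IsAlternatingForm (ω y)) → ContDiffOn ℝ 1 ω V →
    ∫ x in interior (simplexSet (d + 1)), pullbackDensityD σ ω x =
      ∑ i : Fin (d + 2), (-1 : ℝ) ^ (i : ℕ) *
        ∫ b in interior (simplexSet d), pullbackDensity (σ ∘ faceMap d i) ω b

/-- `σ : Δ_d → ℝ^N` is C¹ on all open faces: it is continuous on `Δ_d`, C¹ on the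
interior of `Δ_d`, and all iterated face composites `σ ∘ δ_{i_1} ∘ ⋯ ∘ δ_{i_k}` have
the same property. -/
def C1OnOpenFaces (N : ℕ) : ∀ d, ((Fin d → ℝ) → (Fin N → ℝ)) → Prop
  | 0, σ => ContinuousOn σ (simplexSet 0) ∧ ContDiffOn ℝ 1 σ (interior (simplexSet 0))
  | d + 1, σ => ContinuousOn σ (simplexSet (d + 1)) ∧
      ContDiffOn ℝ 1 σ (interior (simplexSet (d + 1))) ∧
      ∀ i : Fin (d + 2), C1OnOpenFaces N d (σ ∘ faceMap d i)

/-- `σ` and all of its iterated face composites have finite volume. -/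
def FiniteVolumeFaces (N : ℕ) : ∀ d, ((Fin d → ℝ) → (Fin N → ℝ)) → Prop
  | 0, σ => FiniteVolume σ
  | d + 1, σ => FiniteVolume σ ∧ ∀ i : Fin (d + 2), FiniteVolumeFaces N d (σ ∘ faceMap d i)

/-- `σ` and all of its iterated face composites satisfy Stokes
(a `0`-simplex satisfies Stokes by convention). -/
def SatisfiesStokesFaces (N : ℕ) : ∀ d, ((Fin d → ℝ) → (Fin N → ℝ)) → Prop
  | 0, _ => True
  | d + 1, σ => SatisfiesStokes σ ∧ ∀ i : Fin (d + 2), SatisfiesStokesFaces N d (σ ∘ faceMap d i)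

/-- The cone `σ̂ : Δ_{d+1} → ℝ^N` over a simplex `σ : Δ_d → ℝ^N`:
`σ̂(a_0, …, a_d) = A ⬝ σ(a_1/A, …, a_d/A)` with `A = ∑ a_i` if `A ≠ 0`, and `0` else. -/
def cone {d N : ℕ} (σ : (Fin d → ℝ) → (Fin N → ℝ)) (a : Fin (d + 1) → ℝ) : Fin N → ℝ :=
  if (∑ i, a i) = 0 then 0 else (∑ i, a i) • σ fun j => a j.succ / ∑ i, a i

/-- The map `q(t, b) = ((1-t)(1-∑ b), (1-t)b_1, …, (1-t)b_d)` from `[0,1] × Δ_d`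
onto `Δ_{d+1}`. -/
def qMap (d : ℕ) (p : ℝ × (Fin d → ℝ)) : Fin (d + 1) → ℝ :=
  Fin.cons ((1 - p.1) * (1 - ∑ j, p.2 j)) fun j => (1 - p.1) * p.2 j

/-- The inverse `i(a_0, …, a_d) = (1 - A, a_1/A, …, a_d/A)`, `A = ∑ a_i`, of `q`. -/
def iMap (d : ℕ) (a : Fin (d + 1) → ℝ) : ℝ × (Fin d → ℝ) :=
  (1 - ∑ i, a i, fun j => a j.succ / ∑ i, a i)

/-!
An alternating form `A` of degree `d` is `∑_I A(e_{I(1)}, …, e_{I(d)}) dx_I` over increasing `I`,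
because wedges of basis vectors form a basis of the exterior power, with the `d × d` minors as
coordinates. For `A = ω(σ(x))` the coefficients are continuous in `x` on the compact simplex, hence
bounded there, so the pullback density of `ω` is a sum of products of bounded measurable functions
with the integrable pullback densities of the `dx_I`.
-/

section AlternatingExpansion

variable {R M P ι : Type*} [CommRing R] [AddCommGroup M] [Module R M] [AddCommGroup P] [Module R P]
  [LinearOrder ι]

theorem exteriorPower_repr_ιMulti (b : Module.Basis ι R M) {n : ℕ} (v : Fin n → M)
    (s : powersetCard ι n) :
    (b.exteriorPower n).repr (exteriorPower.ιMulti R n v) s =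
      (Matrix.of fun j k => b.repr (v k) (powersetCard.ofFinEmbEquiv.symm s j)).det := by
  rw [exteriorPower.basis_repr_apply, exteriorPower.ιMultiDual_apply_ιMulti,
    ← Matrix.det_transpose]
  rfl

theorem alternatingMap_apply_eq_sum_det_smul [Fintype ι] (b : Module.Basis ι R M)
    {n : ℕ} (A : M [⋀^Fin n]→ₗ[R] P) (v : Fin n → M) :
    A v = ∑ s : powersetCard ι n,
      (Matrix.of fun j k => b.repr (v k) (powersetCard.ofFinEmbEquiv.symm s j)).det •
        A (b ∘ powersetCard.ofFinEmbEquiv.symm s) := by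
  let L : ⋀[R]^n M →ₗ[R] P := exteriorPower.alternatingMapLinearEquiv A
  have hL (w : Fin n → M) : L (exteriorPower.ιMulti R n w) = A w :=
    exteriorPower.alternatingMapLinearEquiv_apply_ιMulti A w
  calc
    A v = L (∑ s, (b.exteriorPower n).repr (exteriorPower.ιMulti R n v) s •
        b.exteriorPower n s) := by rw [(b.exteriorPower n).sum_repr, hL]
    _ = _ := by
      simp only [map_sum, map_smul, exteriorPower_repr_ιMulti, exteriorPower.basis_apply,
        exteriorPower.ιMulti_family, hL]

end AlternatingExpansion

theorem integrableOn_alternating_apply {X 𝕜 E F ι : Type*}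
    [TopologicalSpace X] [MeasurableSpace X] [OpensMeasurableSpace X]
    [NontriviallyNormedField 𝕜] [NormedAddCommGroup E] [NormedSpace 𝕜 E]
    [NormedAddCommGroup F] [NormedSpace 𝕜 F] [SecondCountableTopologyEither X F]
    [LinearOrder ι] [Finite ι] {μ : Measure X} {K s : Set X} (hK : IsCompact K)
    (hs : MeasurableSet s) (hsK : s ⊆ K) (b : Module.Basis ι 𝕜 E) {n : ℕ}
    {A : X → ContinuousMultilinearMap 𝕜 (fun _ : Fin n => E) F} (hA : ContinuousOn A K)
    (hA_alt : ∀ x ∈ s, ∀ w i j, w i = w j → i ≠ j → A x w = 0) {v : X → Fin n → E}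
    (hv : ∀ I : Fin n ↪o ι,
      IntegrableOn (fun x => (Matrix.of fun j k => b.repr (v x k) (I j)).det) s μ) :
    IntegrableOn (fun x => A x (v x)) s μ := by
  have := Fintype.ofFinite ι
  have hcoeff (I : Fin n ↪o ι) : ContinuousOn (fun x => A x (b ∘ I)) K :=
    (ContinuousMultilinearMap.apply 𝕜 (fun _ : Fin n => E) F (b ∘ I)).continuous.comp_continuousOn
      hA
  have hsum : IntegrableOn (fun x => ∑ t : powersetCard ι n,
      (Matrix.of fun j k => b.repr (v x k) (powersetCard.ofFinEmbEquiv.symm t j)).det •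
        A x (b ∘ powersetCard.ofFinEmbEquiv.symm t)) s μ :=
    integrable_finsetSum _ fun t _ =>
      (hv _).smul_continuousOn_of_subset (hcoeff _) hs hK hsK
  refine hsum.congr_fun (fun x hx => ?_) hs
  let Ax : E [⋀^Fin n]→ₗ[𝕜] F :=
    { (A x).toMultilinearMap with map_eq_zero_of_eq' := hA_alt x hx }
  exact (alternatingMap_apply_eq_sum_det_smul b Ax (v x)).symm

theorem isCompact_simplexSet (d : ℕ) : IsCompact (simplexSet d) := by
  have hclosed : IsClosed (simplexSet d) :=
    isClosed_Ici.inter <|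
      isClosed_le (continuous_finsetSum _ fun i _ => continuous_apply i) continuous_const
  refine (isCompact_Icc (a := (0 : Fin d → ℝ)) (b := 1)).of_isClosed_subset hclosed ?_
  rintro b ⟨hnonneg, hsum⟩
  exact ⟨hnonneg, fun i =>
    (Finset.single_le_sum (fun j _ => hnonneg j) (Finset.mem_univ i)).trans hsum⟩

/-- **Lemma 2.2.** If the pullback densities along `σ` of all the constant standard
`d`-forms `dx_I = dx_{I(1)} ∧ ⋯ ∧ dx_{I(d)}` (for strictly increasing `I : {1,…,d} → {1,…,N}`),
namely `x ↦ det((Dσ(x)e_k)_{I(j)})_{j,k}`, are integrable on the interior of `Δ_d`,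
then `σ` has finite volume. -/
theorem finiteVolume_of_standard_forms {d N : ℕ} (σ : (Fin d → ℝ) → (Fin N → ℝ))
    (hc : ContinuousOn σ (simplexSet d))
    (hd : DifferentiableOn ℝ σ (interior (simplexSet d)))
    (h : ∀ I : Fin d → Fin N, StrictMono I →
      IntegrableOn
        (fun x => (Matrix.of fun j k : Fin d =>
          fderiv ℝ σ x (Pi.single k 1) (I j)).det)
        (interior (simplexSet d))) :
    FiniteVolume σ := by
  intro ω hω_alt hω_cont
  have hcont : ContinuousOn (fun x => ω (σ x)) (simplexSet d) :=
    hω_cont.comp hc (mapsTo_image σ _)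
  have halt : ∀ x ∈ interior (simplexSet d), IsAlternatingForm (ω (σ x)) :=
    fun x hx => hω_alt _ (mem_image_of_mem σ (interior_subset hx))
  exact integrableOn_alternating_apply (isCompact_simplexSet d) isOpen_interior.measurableSet
    interior_subset (Pi.basisFun ℝ (Fin N)) hcont halt fun I => h I I.strictMono

end
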